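/- arXiv:math/0104192 — 5 statements merged into one kernel-verified Lean document; each statement's English description precedes it below -/
import Mathlib

section
/- Let Λ be a lattice in ℝ² with minimal length R, and let x ∈ Λ be a vector with ‖x‖ = R. Then every element λ ∈ Λ that does not lie on the line ℝ·x satisfies dist(λ, ℝ·x) ≥ (√3/2)·R. -/
/-!
The foot of the perpendicular from `l` to the line `ℝ·x` lies within `‖x‖ / 2` of some integer
multiple `n • x`. By Pythagoras, `‖l - n • x‖ ^ 2 ≤ d ^ 2 + ‖x‖ ^ 2 / 4`, where `d` is the distance
from `l` to the line. Since `l - n • x` is a nonzero lattice vector, the left-hand side is at least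
`‖x‖ ^ 2`, so `d ^ 2 ≥ 3 / 4 * ‖x‖ ^ 2`.
-/

open Metric Submodule

theorem exists_int_norm_sub_zsmul_le_half {E : Type*} [SeminormedAddCommGroup E] [NormedSpace ℝ E]
    {x p : E} (hp : p ∈ span ℝ {x}) : ∃ n : ℤ, ‖p - n • x‖ ≤ ‖x‖ / 2 := by
  obtain ⟨t, rfl⟩ := mem_span_singleton.mp hp
  refine ⟨round t, ?_⟩
  calc ‖t • x - round t • x‖ = |t - round t| * ‖x‖ := by
        rw [← Int.cast_smul_eq_zsmul ℝ, ← sub_smul, norm_smul, Real.norm_eq_abs]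
    _ ≤ 1 / 2 * ‖x‖ := by gcongr; exact abs_sub_round t
    _ = ‖x‖ / 2 := by ring

section Projection

variable {𝕜 E : Type*} [RCLike 𝕜] [NormedAddCommGroup E] [InnerProductSpace 𝕜 E]
  (K : Submodule 𝕜 E) [K.HasOrthogonalProjection]

theorem infDist_eq_norm_sub_starProjection (u : E) :
    infDist u K = ‖u - K.starProjection u‖ := by
  simp only [infDist_eq_iInf, dist_eq_norm, starProjection_minimal, SetLike.coe_sort_coe]

theorem norm_sub_sq_eq_infDist_sq_add {k : E} (hk : k ∈ K) (u : E) :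
    ‖u - k‖ ^ 2 = infDist u K ^ 2 + ‖K.starProjection u - k‖ ^ 2 := by
  have h_along : K.starProjection (u - k) = K.starProjection u - k := by
    rw [map_sub, starProjection_eq_self_iff.mpr hk]
  have h_normal : Kᗮ.starProjection (u - k) = u - K.starProjection u := by
    rw [starProjection_orthogonal_val, h_along, sub_sub_sub_cancel_right]
  rw [norm_sq_eq_add_norm_sq_starProjection (u - k) K, h_along, h_normal,
    infDist_eq_norm_sub_starProjection, add_comm]

end Projection

section RealInnerProductSpace

variable {E : Type*} [NormedAddCommGroup E] [InnerProductSpace ℝ E]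

theorem exists_int_norm_sub_zsmul_sq_le (l x : E) :
    ∃ n : ℤ, ‖l - n • x‖ ^ 2 ≤ infDist l (span ℝ {x} : Set E) ^ 2 + (‖x‖ / 2) ^ 2 := by
  obtain ⟨n, hn⟩ := exists_int_norm_sub_zsmul_le_half (starProjection_apply_mem (span ℝ {x}) l)
  have hnx : n • x ∈ span ℝ {x} := zsmul_mem (mem_span_singleton_self x) n
  refine ⟨n, ?_⟩
  rw [norm_sub_sq_eq_infDist_sq_add _ hnx]
  gcongr

theorem lattice_point_far_from_shortest_line_general (Λ : AddSubgroup E) {x l : E} (hxΛ : x ∈ Λ)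
    (hmin : ∀ v ∈ Λ, v ≠ 0 → ‖x‖ ≤ ‖v‖) (hlΛ : l ∈ Λ) (hl : l ∉ span ℝ {x}) :
    √3 / 2 * ‖x‖ ≤ infDist l (span ℝ {x} : Set E) := by
  obtain ⟨n, hn⟩ := exists_int_norm_sub_zsmul_sq_le l x
  have h_ne : l - n • x ≠ 0 := fun h ↦
    hl (sub_eq_zero.mp h ▸ zsmul_mem (mem_span_singleton_self x) n)
  have h_short : ‖x‖ ≤ ‖l - n • x‖ := hmin _ (sub_mem hlΛ (zsmul_mem hxΛ n)) h_ne
  have h_sq : ‖x‖ ^ 2 ≤ infDist l (span ℝ {x} : Set E) ^ 2 + (‖x‖ / 2) ^ 2 :=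
    (pow_le_pow_left₀ (norm_nonneg x) h_short 2).trans hn
  refine le_of_sq_le_sq ?_ infDist_nonneg
  calc (√3 / 2 * ‖x‖) ^ 2 = ‖x‖ ^ 2 - (‖x‖ / 2) ^ 2 := by
        rw [mul_pow, div_pow, Real.sq_sqrt zero_le_three]; ring
    _ ≤ infDist l (span ℝ {x} : Set E) ^ 2 := sub_le_iff_le_add.mpr h_sq

end RealInnerProductSpace

/-- If `x` realizes the minimal length `R` of a lattice `Λ` in `ℝ²`,
then every lattice point off the line `ℝ·x` is at distance at least `(√3/2)·R`
from that line. -/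
theorem lattice_point_far_from_shortest_line
    (Λ : Submodule ℤ (EuclideanSpace ℝ (Fin 2))) [DiscreteTopology Λ] [IsZLattice ℝ Λ]
    (R : ℝ) (hR : IsLeast {r : ℝ | ∃ v ∈ Λ, v ≠ 0 ∧ ‖v‖ = r} R)
    (x : EuclideanSpace ℝ (Fin 2)) (hxΛ : x ∈ Λ) (hx : ‖x‖ = R)
    (l : EuclideanSpace ℝ (Fin 2)) (hlΛ : l ∈ Λ)
    (hl : l ∉ Submodule.span ℝ ({x} : Set (EuclideanSpace ℝ (Fin 2)))) :
    Real.sqrt 3 / 2 * R ≤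
      Metric.infDist l (Submodule.span ℝ ({x} : Set (EuclideanSpace ℝ (Fin 2))) : Set (EuclideanSpace ℝ (Fin 2))) := by
  subst hx
  exact lattice_point_far_from_shortest_line_general Λ.toAddSubgroup hxΛ
    (fun v hv hv0 ↦ hR.2 ⟨v, hv, hv0, rfl⟩) hlΛ hl
end

section
/- Let T : ℝ² → ℝ² be an invertible linear map, and let a, b, m ∈ ℤ² with det(a, b) ≠ 0, where det(u, v) := u₁v₂ − u₂v₁. Then (1/2)·‖T m‖/(‖T a‖ + ‖T b‖) ≤ max(|det(m, a)|, |det(m, b)|). -/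
/-- The point of `ℝ²` (with the Euclidean norm) corresponding to an integer vector. -/
noncomputable def intVec (v : Fin 2 → ℤ) : EuclideanSpace ℝ (Fin 2) :=
  (WithLp.equiv 2 (Fin 2 → ℝ)).symm (fun i => (v i : ℝ))

/-- The "determinant" pairing `det(u,v) = u₁v₂ − u₂v₁` on `ℤ²` (algebraic intersection
number of the corresponding geodesics on the torus). -/
def intDet (u v : Fin 2 → ℤ) : ℤ := u 0 * v 1 - u 1 * v 0

/-! Cramer's rule in the plane reads `det(a,b) m = det(m,b) a − det(m,a) b`. Any seminorm `p` on
`ℝ²` therefore satisfies `|det(a,b)| p(m) ≤ |det(m,b)| p(a) + |det(m,a)| p(b)`, and a nonzero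
integer has absolute value at least `1`. Lengths on the torus are given by `p x = ‖T x‖`. -/

theorem intDet_smul_intVec (a b m : Fin 2 → ℤ) :
    (intDet a b : ℝ) • intVec m = (intDet m b : ℝ) • intVec a - (intDet m a : ℝ) • intVec b := by
  ext i
  simp only [intVec, intDet, Int.cast_sub, Int.cast_mul, WithLp.equiv_symm_apply,
    PiLp.smul_apply, PiLp.sub_apply, smul_eq_mul]
  fin_cases i <;> simp only [Fin.zero_eta, Fin.mk_one] <;> ring

theorem abs_intDet_mul_seminorm_le (p : Seminorm ℝ (EuclideanSpace ℝ (Fin 2)))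
    (a b m : Fin 2 → ℤ) :
    |(intDet a b : ℝ)| * p (intVec m) ≤
      |(intDet m b : ℝ)| * p (intVec a) + |(intDet m a : ℝ)| * p (intVec b) := by
  calc |(intDet a b : ℝ)| * p (intVec m)
      = p ((intDet m b : ℝ) • intVec a - (intDet m a : ℝ) • intVec b) := by
        rw [← intDet_smul_intVec, map_smul_eq_mul, Real.norm_eq_abs]
    _ ≤ p ((intDet m b : ℝ) • intVec a) + p ((intDet m a : ℝ) • intVec b) := map_sub_le_add p _ _
    _ = |(intDet m b : ℝ)| * p (intVec a) + |(intDet m a : ℝ)| * p (intVec b) := by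
        simp only [map_smul_eq_mul, Real.norm_eq_abs]

theorem geodesic_intersection_bound_general (p : Seminorm ℝ (EuclideanSpace ℝ (Fin 2)))
    (a b m : Fin 2 → ℤ) (hab : intDet a b ≠ 0) :
    p (intVec m) ≤
      max |(intDet m a : ℝ)| |(intDet m b : ℝ)| * (p (intVec a) + p (intVec b)) := by
  have one_le_abs_det : 1 ≤ |(intDet a b : ℝ)| := by
    exact_mod_cast Int.one_le_abs hab
  calc p (intVec m)
      ≤ |(intDet a b : ℝ)| * p (intVec m) :=
        le_mul_of_one_le_left (apply_nonneg p _) one_le_abs_det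
    _ ≤ |(intDet m b : ℝ)| * p (intVec a) + |(intDet m a : ℝ)| * p (intVec b) :=
        abs_intDet_mul_seminorm_le p a b m
    _ ≤ max |(intDet m a : ℝ)| |(intDet m b : ℝ)| * (p (intVec a) + p (intVec b)) := by
        rw [mul_add]
        gcongr
        exacts [le_max_right _ _, le_max_left _ _]

/-- For an invertible linear map `T : ℝ² → ℝ²` and integer vectors
`a, b, m` with `det(a,b) ≠ 0`,
`(1/2)·‖T m‖/(‖T a‖ + ‖T b‖) ≤ max(|det(m,a)|, |det(m,b)|)`. -/
theorem geodesic_intersection_bound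
    (T : EuclideanSpace ℝ (Fin 2) →ₗ[ℝ] EuclideanSpace ℝ (Fin 2))
    (hT : Function.Bijective T)
    (a b m : Fin 2 → ℤ) (hab : intDet a b ≠ 0) :
    (1 / 2) * ‖T (intVec m)‖ / (‖T (intVec a)‖ + ‖T (intVec b)‖) ≤
      max (|intDet m a| : ℝ) (|intDet m b| : ℝ) := by
  have bound : ‖T (intVec m)‖ ≤ _ :=
    geodesic_intersection_bound_general ((normSeminorm ℝ _).comp T) a b m hab
  exact div_le_of_le_mul₀ (by positivity) (by positivity)
    ((mul_le_of_le_one_left (norm_nonneg _) one_half_lt_one.le).trans bound)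
end

section
/- Let G be a finite simple graph with vertex set V and edge set E, equipped with positive edge weights w : E → ℝ_{>0}, and let N, ε > 0. Suppose (i) the total weight Σ_{e∈E} w(e) is less than N, and (ii) every cycle in G has total weight at least ε. Then the first Betti number of G, namely |E| − |V| + c where c is the number of connected components of G, is at most 32N²/ε². -/
/-!
Adding bridges of weight zero changes neither the cycles nor the total length `L`, and does not
decrease the Betti number, so the graph may be assumed connected. Cutting every edge outside a
spanning tree at its midpoint leaves a tree of length `L`, which a closed depth-first tour
traverses in time `2L`; two points of the tree are never further apart than the times at which the
tour visits them. Each cut edge thus gives a point of `[0, 2L]²`, the pair of times at which its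
two loose ends are visited. A cut edge together with the tree path between its ends contains a
cycle, so the two times differ by at least `ε`. Two cut edges together with the tree paths between
corresponding loose ends also contain a cycle, so the points are `ε`-separated in the `ℓ¹`
distance. Hence each square of a grid of mesh `ε / 2` contains at most one of these points, and
none if it lies on the diagonal.
-/

open Finset SimpleGraph

/-- The length of a walk in a graph whose edges carry weights `w`. -/
def walkLength {V : Type*} {G : SimpleGraph V} (w : Sym2 V → ℝ) {u v : V} (p : G.Walk u v) : ℝ :=
  (p.edges.map w).sum

/-- The first Betti number `|E| - |V| + c` of a finite graph. -/
noncomputable def bettiNumber {V : Type*} (G : SimpleGraph V) : ℤ :=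
  Nat.card G.edgeSet - Nat.card V + Nat.card G.ConnectedComponent

/-- A tour of total length `L` through the vertices of `S`, given by the times `f` at which they
are visited: the time between two visits is at least the distance. -/
structure IsTourOn {V : Type*} (G : SimpleGraph V) (w : Sym2 V → ℝ) (S : Finset V) (L : ℝ)
    (f : V → ℝ) : Prop where
  mem_Icc : ∀ v ∈ S, f v ∈ Set.Icc 0 L
  exists_walkLength_le : ∀ u ∈ S, ∀ v ∈ S, ∃ p : G.Walk u v, walkLength w p ≤ |f u - f v|

section Real

variable {ι : Type*} {s : Finset ι}

/-- Run along a line through the points `t i`, leaving it at each of them for a detour of length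
`h i` out and back: `g i` is the time at which the far end of that detour is reached. -/
theorem exists_detour_times {t h : ι → ℝ} {M : ℝ} (ht : ∀ i ∈ s, t i ∈ Set.Icc 0 M)
    (hh : ∀ i ∈ s, 0 ≤ h i) :
    ∃ g : ι → ℝ, (∀ i ∈ s, g i ∈ Set.Icc 0 (M + 2 * ∑ i ∈ s, h i)) ∧
      (s : Set ι).Pairwise fun i j ↦ |t i - t j| + h i + h j ≤ |g i - g j| := by
  classical
  suffices ∃ g : ι → ℝ, (∀ i ∈ s, t i + h i ≤ g i ∧ g i + h i ≤ t i + 2 * ∑ j ∈ s, h j) ∧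
      (s : Set ι).Pairwise fun i j ↦ |t i - t j| + h i + h j ≤ |g i - g j| by
    obtain ⟨g, hg, hsep⟩ := this
    refine ⟨g, fun i hi ↦ ⟨?_, ?_⟩, hsep⟩ <;> linarith [hg i hi, hh i hi, (ht i hi).1, (ht i hi).2]
  clear ht
  induction s using Finset.induction_on_max_value t with
  | empty => exact ⟨0, by simp⟩
  | insert a s ha hmax ih =>
    obtain ⟨hha, hhs⟩ := (forall_mem_insert ..).1 hh
    obtain ⟨g, hg, hsep⟩ := ih hhs
    have hne {i} (hi : i ∈ s) : i ≠ a := ne_of_mem_of_not_mem hi ha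
    refine ⟨Function.update g a (t a + h a + 2 * ∑ j ∈ s, h j), ?_, ?_⟩
    · rw [sum_insert ha, forall_mem_insert, Function.update_self]
      refine ⟨⟨by linarith [sum_nonneg hhs], by linarith⟩, fun i hi ↦ ?_⟩
      rw [Function.update_of_ne (hne hi)]
      exact ⟨(hg i hi).1, by linarith [(hg i hi).2]⟩
    · rw [coe_insert, Set.pairwise_insert_of_notMem (mod_cast ha)]
      have hlast : ∀ i ∈ s, |t i - t a| + h i + h a ≤ |g i - (t a + h a + 2 * ∑ j ∈ s, h j)| :=
        fun i hi ↦ by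
          rw [abs_sub_comm, abs_of_nonneg (sub_nonneg.2 (hmax i hi))]
          exact le_abs'.2 (.inl (by linarith [(hg i hi).2]))
      refine ⟨fun i hi j hj hij ↦ ?_, fun i hi ↦ ?_⟩
      · simpa [hne hi, hne hj] using hsep hi hj hij
      · have := hlast i hi
        simp only [Function.update_self, Function.update_of_ne (hne hi)]
        exact ⟨by rw [abs_sub_comm, add_right_comm, abs_sub_comm _ (g i)]; exact this, this⟩

theorem abs_sub_lt_of_floor_div_eq {ε x y : ℝ} (hε : 0 < ε) (hx : 0 ≤ x) (hy : 0 ≤ y)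
    (h : ⌊x / ε⌋₊ = ⌊y / ε⌋₊) : |x - y| < ε := by
  have hdiv : |x / ε - y / ε| < 1 := by
    apply Int.abs_sub_lt_one_of_floor_eq_floor
    rw [← Int.natCast_floor_eq_floor (by positivity), h, Int.natCast_floor_eq_floor (by positivity)]
  rwa [← sub_div, abs_div, abs_of_pos hε, div_lt_one hε] at hdiv

theorem card_le_of_pairwise_le_abs_sub_add_abs_sub {x y : ι → ℝ} {M ε : ℝ} (hε : 0 < ε)
    (hx : ∀ i ∈ s, x i ∈ Set.Icc 0 M) (hy : ∀ i ∈ s, y i ∈ Set.Icc 0 M)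
    (hdiag : ∀ i ∈ s, ε ≤ |x i - y i|)
    (hsep : (s : Set ι).Pairwise fun i j ↦ ε ≤ |x i - x j| + |y i - y j|) :
    (#s : ℝ) ≤ 8 * M ^ 2 / ε ^ 2 := by
  obtain rfl | ⟨i₀, hi₀⟩ := s.eq_empty_or_nonempty
  · simpa using by positivity
  have hM : 0 ≤ M := (hx i₀ hi₀).1.trans (hx i₀ hi₀).2
  set cell : ℝ → ℕ := fun t ↦ ⌊t / (ε / 2)⌋₊
  have cell_mem {t} (ht : t ∈ Set.Icc 0 M) : cell t ∈ range (cell M + 1) :=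
    mem_range_succ_iff.2 (Nat.floor_mono (by have := ht.2; gcongr))
  have abs_sub_lt {t t'} (ht : t ∈ Set.Icc 0 M) (ht' : t' ∈ Set.Icc 0 M) (h : cell t = cell t') :
      |t - t'| < ε / 2 :=
    abs_sub_lt_of_floor_div_eq (half_pos hε) ht.1 ht'.1 h
  have hcard : #s ≤ #(range (cell M + 1)).offDiag := by
    refine card_le_card_of_injOn (fun i ↦ (cell (x i), cell (y i))) (fun i hi ↦ ?_)
      fun i hi j hj hij ↦ ?_
    · refine mem_offDiag.2 ⟨cell_mem (hx i hi), cell_mem (hy i hi), fun h ↦ ?_⟩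
      linarith [abs_sub_lt (hx i hi) (hy i hi) h, hdiag i hi]
    · obtain ⟨hxc, hyc⟩ := Prod.ext_iff.1 hij
      by_contra hne
      linarith [abs_sub_lt (hx i hi) (hx j hj) hxc, abs_sub_lt (hy i hi) (hy j hj) hyc,
        hsep hi hj hne]
  have hoffDiag : #(range (cell M + 1)).offDiag ≤ 2 * cell M ^ 2 := by
    rw [offDiag_card, card_range, Nat.sub_le_iff_le_add]
    nlinarith [Nat.le_self_pow two_ne_zero (cell M)]
  calc (#s : ℝ) ≤ 2 * (cell M : ℝ) ^ 2 := mod_cast hcard.trans hoffDiag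
    _ ≤ 2 * (M / (ε / 2)) ^ 2 := by gcongr; exact Nat.floor_le (by positivity)
    _ = 8 * M ^ 2 / ε ^ 2 := by field_simp; ring

end Real

section Walk

variable {V : Type*} {G H : SimpleGraph V} {w : Sym2 V → ℝ} {a b c : V}

@[simp]
theorem walkLength_nil : walkLength w (Walk.nil : G.Walk a a) = 0 := by
  simp [walkLength]

@[simp]
theorem walkLength_cons (h : G.Adj a b) (p : G.Walk b c) :
    walkLength w (p.cons h) = w s(a, b) + walkLength w p := by
  simp [walkLength]

@[simp]
theorem walkLength_append (p : G.Walk a b) (q : G.Walk b c) :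
    walkLength w (p.append q) = walkLength w p + walkLength w q := by
  simp [walkLength]

@[simp]
theorem walkLength_reverse (p : G.Walk a b) : walkLength w p.reverse = walkLength w p := by
  simp [walkLength]

@[simp]
theorem walkLength_mapLe (h : G ≤ H) (p : G.Walk a b) :
    walkLength w (p.mapLe h) = walkLength w p := by
  simp [walkLength]

theorem walkLength_bypass_le [DecidableEq V] (hw : ∀ e ∈ G.edgeSet, 0 ≤ w e) (p : G.Walk a b) :
    walkLength w p.bypass ≤ walkLength w p := by
  obtain ⟨l, hl, hsub⟩ := p.bypass_isPath.isTrail.edges_nodup.subperm p.edges_bypass_subset_edges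
  rw [walkLength, ← (hl.map w).sum_eq]
  refine (hsub.map w).sum_le_sum fun x hx ↦ ?_
  obtain ⟨e, he, rfl⟩ := List.mem_map.1 hx
  exact hw e (p.edges_subset_edgeSet he)

theorem exists_isCycle_walkLength_le (hw : ∀ e ∈ G.edgeSet, 0 ≤ w e) (hab : G.Adj a b)
    (p : G.Walk b a) (hp : s(a, b) ∉ p.edges) :
    ∃ c : G.Walk a a, c.IsCycle ∧ walkLength w c ≤ w s(a, b) + walkLength w p := by
  classical
  refine ⟨p.bypass.cons hab, (Walk.cons_isCycle_iff ..).2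
    ⟨p.bypass_isPath, fun h ↦ hp (p.edges_bypass_subset_edges h)⟩, ?_⟩
  rw [walkLength_cons]
  gcongr
  exact walkLength_bypass_le hw p

end Walk

section Connected

variable {V : Type*} {G : SimpleGraph V} {w : Sym2 V → ℝ}

theorem connected_finset_induction [Fintype V] [DecidableEq V] (hG : G.Connected)
    {P : Finset V → Prop} (singleton : ∀ v, P {v})
    (insert : ∀ S u v, u ∈ S → v ∉ S → G.Adj u v → P S → P (insert v S)) : P univ := by
  obtain ⟨v₀⟩ := hG.nonempty
  obtain ⟨S, ⟨⟨u, hu⟩, hPS⟩, hmax⟩ := Set.Finite.exists_maximal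
    (Set.toFinite {S : Finset V | S.Nonempty ∧ P S}) ⟨{v₀}, singleton_nonempty v₀, singleton v₀⟩
  suffices ∀ v, v ∈ S by rwa [← eq_univ_iff_forall.2 this]
  by_contra! ⟨v, hv⟩
  obtain ⟨p⟩ := hG.preconnected u v
  obtain ⟨d, -, hfst, hsnd⟩ := p.exists_boundary_dart S hu hv
  exact hsnd (hmax ⟨insert_nonempty .., insert S d.fst d.snd hfst hsnd d.adj hPS⟩
    (subset_insert ..) (mem_insert_self ..))

theorem IsTourOn.exists_insert [DecidableEq V] {S : Finset V} {L : ℝ} {f : V → ℝ} {u v : V}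
    (hf : IsTourOn G w S L f) (hu : u ∈ S) (hv : v ∉ S) (huv : G.Adj u v) (hw : 0 ≤ w s(u, v)) :
    ∃ g, IsTourOn G w (insert v S) (L + 2 * w s(u, v)) g := by
  have hne {x} (hx : x ∈ S) : x ≠ v := ne_of_mem_of_not_mem hx hv
  obtain ⟨g, hg, hsep⟩ := exists_detour_times (s := insert v S) (t := Function.update f v (f u))
    (h := Pi.single v (w s(u, v))) (M := L)
    ((forall_mem_insert ..).2 ⟨by simpa using hf.mem_Icc u hu, fun x hx ↦ by
      simpa [hne hx] using hf.mem_Icc x hx⟩)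
    ((forall_mem_insert ..).2 ⟨by simpa, fun x hx ↦ by simp [hne hx]⟩)
  have hold {x y} (hx : x ∈ S) (hy : y ∈ S) : |f x - f y| ≤ |g x - g y| := by
    obtain rfl | hxy := eq_or_ne x y
    · simp
    · simpa [hne hx, hne hy] using
        hsep (mem_insert_of_mem hx) (mem_insert_of_mem hy) hxy
  have hnew {x} (hx : x ∈ S) : w s(u, v) + |f u - f x| ≤ |g v - g x| := by
    simpa [hne hx, add_comm] using
      hsep (mem_insert_self v S) (mem_insert_of_mem hx) (hne hx).symm
  have hwalk {x} (hx : x ∈ S) : ∃ p : G.Walk v x, walkLength w p ≤ |g v - g x| := by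
    obtain ⟨p, hp⟩ := hf.exists_walkLength_le u hu x hx
    refine ⟨p.cons huv.symm, ?_⟩
    rw [walkLength_cons, Sym2.eq_swap]
    linarith [hnew hx]
  refine ⟨g, fun x hx ↦ by simpa using hg x hx, ?_⟩
  simp only [forall_mem_insert]
  refine ⟨⟨⟨.nil, by simp⟩, fun x hx ↦ hwalk hx⟩, fun x hx ↦ ⟨?_, fun y hy ↦ ?_⟩⟩
  · obtain ⟨p, hp⟩ := hwalk hx
    exact ⟨p.reverse, by rwa [walkLength_reverse, abs_sub_comm]⟩
  · obtain ⟨p, hp⟩ := hf.exists_walkLength_le x hx y hy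
    exact ⟨p, hp.trans (hold hx hy)⟩

theorem IsTourOn.mono {S : Finset V} {L M : ℝ} {f : V → ℝ} (hf : IsTourOn G w S L f)
    (hLM : L ≤ M) : IsTourOn G w S M f :=
  ⟨fun v hv ↦ ⟨(hf.mem_Icc v hv).1, (hf.mem_Icc v hv).2.trans hLM⟩, hf.exists_walkLength_le⟩

variable [Fintype V]

theorem exists_isTourOn_univ [Fintype G.edgeSet] (hG : G.Connected)
    (hw : ∀ e ∈ G.edgeSet, 0 ≤ w e) :
    ∃ f, IsTourOn G w univ (2 * ∑ e ∈ G.edgeFinset, w e) f := by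
  classical
  -- The edges inside `S` pay for the tour through `S`, so a new vertex comes with an unspent edge.
  suffices ∃ f, IsTourOn G w univ (2 * ∑ e ∈ G.edgeFinset with e ∈ univ.sym2, w e) f by simpa
  refine connected_finset_induction hG
    (P := fun S ↦ ∃ f, IsTourOn G w S (2 * ∑ e ∈ G.edgeFinset with e ∈ S.sym2, w e) f)
    (fun v ↦ ⟨0, ?_, ?_⟩) fun S u v hu hv huv ⟨f, hf⟩ ↦ ?_
  · simpa using sum_nonneg fun e he ↦ hw e (mem_edgeFinset.1 (mem_filter.1 he).1)
  · simpa using ⟨.nil, by simp⟩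
  · obtain ⟨g, hg⟩ := hf.exists_insert hu hv huv (hw _ huv)
    refine ⟨g, hg.mono ?_⟩
    rw [← mul_add]
    gcongr
    rw [add_comm, ← sum_insert (by simp [hv])]
    refine sum_le_sum_of_subset_of_nonneg (insert_subset_iff.2 ⟨?_, ?_⟩)
      fun e he _ ↦ hw e (mem_edgeFinset.1 (mem_filter.1 he).1)
    · simpa [hu] using huv
    · exact monotone_filter_right _ fun e _ he ↦ sym2_mono (subset_insert v S) he

theorem sum_dart_edge [DecidableRel G.Adj] (φ : Sym2 V → ℝ) :
    ∑ d : G.Dart, φ d.edge = 2 * ∑ e ∈ G.edgeFinset, φ e := by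
  classical
  rw [← sum_fiberwise_of_maps_to (t := G.edgeFinset) (g := Dart.edge)
    fun d _ ↦ mem_edgeFinset.2 d.edge_mem, mul_sum]
  refine sum_congr rfl fun e he ↦ ?_
  rw [sum_congr rfl fun d hd ↦ congrArg φ (mem_filter.1 hd).2, sum_const,
    G.dart_edge_fiber_card e (mem_edgeFinset.1 he), nsmul_eq_mul, Nat.cast_ofNat]

/-- Cut every edge of `G` outside `T` at its midpoint and tour the result: a dart stands for the
half-edge at its source, and `g` is the time at which the loose end of that half-edge is visited. -/
theorem exists_halfEdge_tour [DecidableRel G.Adj] {T : SimpleGraph V} (hT : T.Connected)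
    (hTG : T ≤ G) (hw : ∀ e ∈ G.edgeSet, 0 ≤ w e) :
    ∃ g : G.Dart → ℝ, (∀ d, d.edge ∉ T.edgeSet → g d ∈ Set.Icc 0 (2 * ∑ e ∈ G.edgeFinset, w e)) ∧
      {d | d.edge ∉ T.edgeSet}.Pairwise fun d d' ↦ ∃ p : T.Walk d.fst d'.fst,
        walkLength w p + w d.edge / 2 + w d'.edge / 2 ≤ |g d - g d'| := by
  classical
  obtain ⟨f, hf⟩ := exists_isTourOn_univ hT fun e he ↦ hw e (edgeSet_mono hTG he)
  obtain ⟨g, hg, hsep⟩ := exists_detour_times (s := {d : G.Dart | d.edge ∉ T.edgeSet})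
    (t := fun d ↦ f d.fst) (h := fun d ↦ w d.edge / 2)
    (fun d _ ↦ hf.mem_Icc d.fst (mem_univ _)) fun d _ ↦ div_nonneg (hw _ d.edge_mem) zero_le_two
  have hsum : ∑ d : G.Dart with d.edge ∉ T.edgeSet, w d.edge / 2 =
      ∑ e ∈ G.edgeFinset \ T.edgeFinset, w e := by
    have hdart := sum_dart_edge (G := G) fun e ↦ if e ∉ T.edgeSet then w e / 2 else 0
    rw [sum_filter, hdart, ← sum_filter, mul_sum, ← filter_notMem_eq_sdiff]
    simp only [mul_div_cancel₀ _ (two_ne_zero' ℝ), mem_edgeFinset]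
  have htotal : 2 * ∑ e ∈ T.edgeFinset, w e + 2 * ∑ d : G.Dart with d.edge ∉ T.edgeSet,
      w d.edge / 2 = 2 * ∑ e ∈ G.edgeFinset, w e := by
    rw [hsum, ← mul_add, add_comm, sum_sdiff (edgeFinset_mono hTG)]
  refine ⟨g, fun d hd ↦ htotal ▸ hg d (by simpa using hd), fun d hd d' hd' hne ↦ ?_⟩
  obtain ⟨p, hp⟩ := hf.exists_walkLength_le d.fst (mem_univ _) d'.fst (mem_univ _)
  refine ⟨p, le_trans (by gcongr) (hsep (by simpa using hd) (by simpa using hd') hne)⟩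

end Connected

section Cycles

variable {V : Type*} {G T : SimpleGraph V} {w : Sym2 V → ℝ} {ε : ℝ}

theorem le_walkLength_add_of_dart_notMem (hTG : T ≤ G) (hw : ∀ e ∈ G.edgeSet, 0 ≤ w e)
    (hcycle : ∀ (v : V) (c : G.Walk v v), c.IsCycle → ε ≤ walkLength w c) {d : G.Dart}
    (hd : d.edge ∉ T.edgeSet) (p : T.Walk d.fst d.snd) : ε ≤ walkLength w p + w d.edge := by
  obtain ⟨c, hc, hle⟩ := exists_isCycle_walkLength_le hw d.adj (p.reverse.mapLe hTG) fun h ↦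
    hd (p.reverse.edges_subset_edgeSet (Walk.edges_mapLe_eq_edges hTG p.reverse ▸ h))
  have := hcycle _ c hc
  rw [walkLength_mapLe, walkLength_reverse] at hle
  linarith [show w s(d.fst, d.snd) = w d.edge from rfl]

theorem le_walkLength_add_of_dart_ne (hTG : T ≤ G) (hw : ∀ e ∈ G.edgeSet, 0 ≤ w e)
    (hcycle : ∀ (v : V) (c : G.Walk v v), c.IsCycle → ε ≤ walkLength w c) {d d' : G.Dart}
    (hd : d.edge ∉ T.edgeSet) (hne : d.edge ≠ d'.edge) (p : T.Walk d.fst d'.fst)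
    (q : T.Walk d.snd d'.snd) :
    ε ≤ walkLength w p + walkLength w q + w d.edge + w d'.edge := by
  obtain ⟨c, hc, hle⟩ := exists_isCycle_walkLength_le hw d.adj
    ((q.mapLe hTG).append ((p.reverse.mapLe hTG).cons d'.adj.symm)) fun h ↦ by
      rw [Walk.edges_append, Walk.edges_cons, Walk.edges_mapLe_eq_edges, Walk.edges_mapLe_eq_edges,
        List.mem_append, List.mem_cons] at h
      obtain h | h | h := h
      · exact hd (q.edges_subset_edgeSet h)
      · exact hne (h.trans Sym2.eq_swap)
      · exact hd (p.reverse.edges_subset_edgeSet h)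
  have := hcycle _ c hc
  simp only [walkLength_append, walkLength_cons, walkLength_mapLe, walkLength_reverse] at hle
  have hd' : w s(d'.snd, d'.fst) = w d'.edge := congrArg w Sym2.eq_swap
  linarith [show w s(d.fst, d.snd) = w d.edge from rfl]

theorem exists_separated_dart_times [Fintype V] [DecidableRel G.Adj] (hT : T.Connected)
    (hTG : T ≤ G) (hw : ∀ e ∈ G.edgeSet, 0 ≤ w e)
    (hcycle : ∀ (v : V) (c : G.Walk v v), c.IsCycle → ε ≤ walkLength w c) :
    ∃ g : G.Dart → ℝ, (∀ d, d.edge ∉ T.edgeSet → g d ∈ Set.Icc 0 (2 * ∑ e ∈ G.edgeFinset, w e)) ∧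
      (∀ d, d.edge ∉ T.edgeSet → ε ≤ |g d - g d.symm|) ∧
      ∀ d d', d.edge ∉ T.edgeSet → d'.edge ∉ T.edgeSet → d.edge ≠ d'.edge →
        ε ≤ |g d - g d'| + |g d.symm - g d'.symm| := by
  obtain ⟨g, hg, hsep⟩ := exists_halfEdge_tour hT hTG hw
  have hsymm {d : G.Dart} (hd : d.edge ∉ T.edgeSet) : d.symm.edge ∉ T.edgeSet := by
    rwa [Dart.edge_symm]
  refine ⟨g, hg, fun d hd ↦ ?_, fun d d' hd hd' hne ↦ ?_⟩
  · obtain ⟨p, hp⟩ := hsep hd (hsymm hd) d.symm_ne.symm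
    calc ε ≤ walkLength w p + w d.edge := le_walkLength_add_of_dart_notMem hTG hw hcycle hd p
      _ = walkLength w p + w d.edge / 2 + w d.symm.edge / 2 := by rw [Dart.edge_symm]; ring
      _ ≤ |g d - g d.symm| := hp
  · obtain ⟨p, hp⟩ := hsep hd hd' (hne <| congrArg Dart.edge ·)
    obtain ⟨q, hq⟩ := hsep (hsymm hd) (hsymm hd') fun h ↦ hne <| by
      simpa using congrArg Dart.edge h
    rw [Dart.edge_symm, Dart.edge_symm] at hq
    calc ε ≤ walkLength w p + walkLength w q + w d.edge + w d'.edge :=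
          le_walkLength_add_of_dart_ne hTG hw hcycle hd hne p q
      _ ≤ |g d - g d'| + |g d.symm - g d'.symm| := by linarith

end Cycles

section Glue

variable {V : Type*} {G : SimpleGraph V} {a b : V}

theorem mem_edgeSet_of_isCycle_sup_edge (hab : ¬G.Reachable a b) {v : V}
    {c : (G ⊔ edge a b).Walk v v} (hc : c.IsCycle) {e : Sym2 V} (he : e ∈ c.edges) :
    e ∈ G.edgeSet := by
  have hne : a ≠ b := fun h ↦ hab (h ▸ .rfl)
  have hbridge : s(a, b) ∉ c.edges := by
    refine (isBridge_iff_forall_cycle_notMem (by simp [hne])).1 ?_ c hc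
    exact isBridge_sup_edge.2 (.of_not_reachable hab)
  have := c.edges_subset_edgeSet he
  rw [edgeSet_sup, edgeSet_edge_of_ne hne] at this
  exact this.resolve_right fun h ↦ hbridge (h ▸ he)

variable [Finite V]

theorem card_connectedComponent_le_sup_edge (G : SimpleGraph V) (a b : V) :
    Nat.card G.ConnectedComponent ≤ Nat.card (G ⊔ edge a b).ConnectedComponent + 1 := by
  classical
  -- In `G ⊔ edge a b` the component of `b` is merged into that of `a`; `none` recovers it.
  let φ (v : V) : G.ConnectedComponent :=
    if G.connectedComponentMk v = G.connectedComponentMk b then G.connectedComponentMk a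
    else G.connectedComponentMk v
  have hφ {u v} (h : (G ⊔ edge a b).Adj u v) : φ u = φ v := by
    obtain h | h := h
    · simp only [φ, ConnectedComponent.sound h.reachable]
    · obtain ⟨⟨rfl, rfl⟩ | ⟨rfl, rfl⟩, -⟩ := (edge_adj ..).1 h <;> simp [φ]
  have hlift {u v} (p : (G ⊔ edge a b).Walk u v) : φ u = φ v := by
    induction p with
    | nil => rfl
    | cons h _ ih => exact (hφ h).trans ih
  rw [← Finite.card_option]
  refine Nat.card_le_card_of_surjective
    (fun o ↦ o.elim (G.connectedComponentMk b) (ConnectedComponent.lift φ fun _ _ p _ ↦ hlift p))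
    fun C ↦ ?_
  obtain ⟨v, rfl⟩ := C.exists_rep
  change ∃ o, _ = G.connectedComponentMk v
  by_cases hv : G.connectedComponentMk v = G.connectedComponentMk b
  · exact ⟨none, hv.symm⟩
  · exact ⟨some (connectedComponentMk _ v), if_neg hv⟩

theorem bettiNumber_le_sup_edge (hab : ¬G.Adj a b) (hne : a ≠ b) :
    bettiNumber G ≤ bettiNumber (G ⊔ edge a b) := by
  classical
  have := Fintype.ofFinite V
  have hE : Nat.card (G ⊔ edge a b).edgeSet = Nat.card G.edgeSet + 1 := by
    rw [Nat.card_eq_fintype_card, Nat.card_eq_fintype_card, ← edgeFinset_card, ← edgeFinset_card,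
      G.card_edgeFinset_sup_edge hab hne]
  have hC := card_connectedComponent_le_sup_edge G a b
  simp only [bettiNumber]
  lia

theorem exists_connected_bettiNumber_le [Nonempty V] (G : SimpleGraph V) :
    ∃ H ≥ G, H.Connected ∧ bettiNumber G ≤ bettiNumber H ∧
      ∀ (v : V) (c : H.Walk v v), c.IsCycle → ∀ e ∈ c.edges, e ∈ G.edgeSet := by
  obtain ⟨H, ⟨hGH, hb, hcycle⟩, hmax⟩ := Set.Finite.exists_maximal
    (Set.toFinite {H | G ≤ H ∧ bettiNumber G ≤ bettiNumber H ∧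
      ∀ (v : V) (c : H.Walk v v), c.IsCycle → ∀ e ∈ c.edges, e ∈ G.edgeSet})
    ⟨G, le_rfl, le_rfl, fun _ c _ _ he ↦ c.edges_subset_edgeSet he⟩
  refine ⟨H, hGH, ⟨fun a b ↦ ?_⟩, hb, hcycle⟩
  by_contra hab
  have hne : a ≠ b := fun h ↦ hab (h ▸ .rfl)
  have hadj : ¬H.Adj a b := fun h ↦ hab h.reachable
  refine (H.lt_sup_edge a b hne hadj).not_ge (hmax ⟨hGH.trans le_sup_left,
    hb.trans (bettiNumber_le_sup_edge hadj hne), fun v c hc e he ↦ ?_⟩ le_sup_left)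
  have hcH : ∀ e ∈ c.edges, e ∈ H.edgeSet := fun e ↦ mem_edgeSet_of_isCycle_sup_edge hab hc
  exact hcycle v (c.transfer H hcH) (hc.transfer hcH) e (by rwa [Walk.edges_transfer])

end Glue

section Betti

variable {V : Type*} [Fintype V] {G T : SimpleGraph V} [DecidableRel G.Adj] {w : Sym2 V → ℝ}
  {ε : ℝ}

theorem bettiNumber_eq_card_sdiff [DecidableEq V] [Fintype T.edgeSet] (hT : T.IsTree)
    (hTG : T ≤ G) : bettiNumber G = #(G.edgeFinset \ T.edgeFinset) := by
  have := (hT.connected.mono hTG).preconnected.subsingleton_connectedComponent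
  have := (hT.connected.mono hTG).nonempty
  have hV : #T.edgeFinset + 1 = Fintype.card V := hT.card_edgeFinset
  have hsub := edgeFinset_mono hTG
  rw [bettiNumber, Nat.card_eq_fintype_card, Nat.card_eq_fintype_card, ← edgeFinset_card,
    Nat.card_unique, card_sdiff_of_subset hsub, Nat.cast_sub (card_le_card hsub)]
  push_cast
  lia

theorem bettiNumber_le_of_connected (hG : G.Connected) (hw : ∀ e ∈ G.edgeSet, 0 ≤ w e)
    (hε : 0 < ε) (hcycle : ∀ (v : V) (c : G.Walk v v), c.IsCycle → ε ≤ walkLength w c) :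
    (bettiNumber G : ℝ) ≤ 32 * (∑ e ∈ G.edgeFinset, w e) ^ 2 / ε ^ 2 := by
  classical
  obtain ⟨T, hTG, hT⟩ := hG.exists_isTree_le
  obtain ⟨g, hg, hself, hsep⟩ := exists_separated_dart_times hT.connected hTG hw hcycle
  have hdart (e : ↥(G.edgeFinset \ T.edgeFinset)) :
      ∃ d : G.Dart, d.edge = e ∧ d.edge ∉ T.edgeSet := by
    obtain ⟨⟨a, b⟩, he⟩ := e
    rw [mem_sdiff, mem_edgeFinset, mem_edgeFinset] at he
    exact ⟨⟨(a, b), he.1⟩, rfl, he.2⟩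
  choose dart hedge hnotMem using hdart
  have hsymm e : (dart e).symm.edge ∉ T.edgeSet := by rw [Dart.edge_symm]; exact hnotMem e
  calc (bettiNumber G : ℝ) = #(univ : Finset ↥(G.edgeFinset \ T.edgeFinset)) := by
        rw [bettiNumber_eq_card_sdiff hT hTG, card_univ, Fintype.card_coe, Int.cast_natCast]
    _ ≤ 8 * (2 * ∑ e ∈ G.edgeFinset, w e) ^ 2 / ε ^ 2 := by
      refine card_le_of_pairwise_le_abs_sub_add_abs_sub (x := fun e ↦ g (dart e))
        (y := fun e ↦ g (dart e).symm) hε (fun e _ ↦ hg _ (hnotMem e)) (fun e _ ↦ hg _ (hsymm e))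
        (fun e _ ↦ hself _ (hnotMem e)) fun e _ e' _ hne ↦ hsep _ _ (hnotMem e) (hnotMem e') ?_
      rwa [hedge, hedge, Ne, ← Subtype.ext_iff]
    _ = 32 * (∑ e ∈ G.edgeFinset, w e) ^ 2 / ε ^ 2 := by ring

theorem bettiNumber_le_of_forall_isCycle (hw : ∀ e ∈ G.edgeSet, 0 ≤ w e) (hε : 0 < ε)
    (hcycle : ∀ (v : V) (c : G.Walk v v), c.IsCycle → ε ≤ walkLength w c) :
    (bettiNumber G : ℝ) ≤ 32 * (∑ e ∈ G.edgeFinset, w e) ^ 2 / ε ^ 2 := by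
  classical
  cases isEmpty_or_nonempty V
  · have hzero : bettiNumber G = 0 := by simp [bettiNumber]
    rw [hzero, Int.cast_zero]
    positivity
  obtain ⟨H, hGH, hH, hbetti, hHG⟩ := exists_connected_bettiNumber_le G
  let w' : Sym2 V → ℝ := G.edgeSet.indicator w
  have hcycle' (v : V) (c : H.Walk v v) (hc : c.IsCycle) : ε ≤ walkLength w' c := by
    have hcG := hHG v c hc
    have hlength : walkLength w' c = walkLength w (c.transfer G hcG) := by
      rw [walkLength, walkLength, Walk.edges_transfer]
      exact congrArg List.sum (List.map_congr_left fun e he ↦ Set.indicator_of_mem (hcG e he) w)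
    exact hlength ▸ hcycle v _ (hc.transfer hcG)
  have hsum : ∑ e ∈ H.edgeFinset, w' e = ∑ e ∈ G.edgeFinset, w e := by
    rw [← sum_subset (edgeFinset_mono hGH) fun e _ he ↦
      Set.indicator_of_notMem (mem_edgeFinset.not.1 he) w]
    exact sum_congr rfl fun e he ↦ Set.indicator_of_mem (mem_edgeFinset.1 he) w
  calc (bettiNumber G : ℝ) ≤ bettiNumber H := mod_cast hbetti
    _ ≤ 32 * (∑ e ∈ H.edgeFinset, w' e) ^ 2 / ε ^ 2 :=
      bettiNumber_le_of_connected hH (fun e _ ↦ Set.indicator_nonneg hw e) hε hcycle'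
    _ = 32 * (∑ e ∈ G.edgeFinset, w e) ^ 2 / ε ^ 2 := by rw [hsum]

end Betti

/-- A finite metric graph of total length less than `N` in which every
cycle has length at least `ε` has first Betti number `|E| − |V| + c` at most `32N²/ε²`. -/
theorem betti_bound_of_metric_graph
    {V : Type*} [Fintype V] (G : SimpleGraph V) [DecidableRel G.Adj]
    (w : Sym2 V → ℝ) (N ε : ℝ) (hN : 0 < N) (hε : 0 < ε)
    (hw : ∀ e ∈ G.edgeSet, 0 < w e)
    (htotal : ∑ e ∈ G.edgeFinset, w e < N)
    (hcycle : ∀ (v : V) (c : G.Walk v v), c.IsCycle → ε ≤ (c.edges.map w).sum) :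
    ((G.edgeFinset.card : ℝ) - (Fintype.card V : ℝ) + (Nat.card G.ConnectedComponent : ℝ)) ≤
      32 * N ^ 2 / ε ^ 2 := by
  have hw₀ : ∀ e ∈ G.edgeSet, 0 ≤ w e := fun e he ↦ (hw e he).le
  have hsum : 0 ≤ ∑ e ∈ G.edgeFinset, w e := sum_nonneg fun e he ↦ hw₀ e (mem_edgeFinset.1 he)
  calc (#G.edgeFinset : ℝ) - Fintype.card V + Nat.card G.ConnectedComponent = bettiNumber G := by
        simp [bettiNumber, edgeFinset_card]
    _ ≤ 32 * (∑ e ∈ G.edgeFinset, w e) ^ 2 / ε ^ 2 := bettiNumber_le_of_forall_isCycle hw₀ hε hcycle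
    _ ≤ 32 * N ^ 2 / ε ^ 2 := by gcongr
end

section
/- Let k ≥ 1 and let A be a k × k integer matrix with |det A| = N, where N ≥ 1. Then Σ_{i,j} |a_{ij}| ≥ N^{1/k} + k − 1. -/
/-!
Expanding the product of the row sums of a nonnegative matrix gives a sum over all functions, of
which the permanent is the part indexed by permutations. Hence `‖det A‖` is at most the product of
the `ℓ¹`-norms of the rows, and the AM-GM inequality turns this into a lower bound
`k ‖det A‖^(1/k)` for their sum. Where `|det A| ≥ 1`, this is at least `|det A|^(1/k) + k - 1`,
because `x y - (x + y - 1) = (x - 1) (y - 1)`.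
-/

section Permanent

variable {ι R : Type*} [Fintype ι] [DecidableEq ι]

lemma permanent_le_prod_row_sum [CommSemiring R] [PartialOrder R] [IsOrderedRing R]
    {M : Matrix ι ι R} (hM : ∀ i j, 0 ≤ M i j) :
    M.permanent ≤ ∏ i, ∑ j, M i j := by
  let coeEmb : Equiv.Perm ι ↪ (ι → ι) := ⟨DFunLike.coe, DFunLike.coe_injective⟩
  calc M.permanent
      = ∑ σ : Equiv.Perm ι, ∏ i, M i (σ i) := by
        rw [← Matrix.permanent_transpose]; rfl
    _ = ∑ f ∈ Finset.univ.map coeEmb, ∏ i, M i (f i) := by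
        rw [Finset.sum_map]; rfl
    _ ≤ ∑ f : ι → ι, ∏ i, M i (f i) :=
        Finset.sum_le_sum_of_subset_of_nonneg (Finset.subset_univ _)
          fun f _ _ => Finset.prod_nonneg fun i _ => hM i (f i)
    _ = ∏ i, ∑ j, M i j := (Fintype.prod_sum fun i j => M i j).symm

lemma norm_det_le_permanent_map_norm [NormedCommRing R] [Nonempty ι] (A : Matrix ι ι R) :
    ‖A.det‖ ≤ (A.map norm).permanent := by
  rw [Matrix.det_apply]
  refine norm_sum_le_of_le _ fun σ _ => ?_
  rw [norm_units_zsmul]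
  exact Finset.norm_prod_le' Finset.univ Finset.univ_nonempty fun i => A (σ i) i

lemma norm_det_le_prod_row_sum_norm [NormedCommRing R] [Nonempty ι] (A : Matrix ι ι R) :
    ‖A.det‖ ≤ ∏ i, ∑ j, ‖A i j‖ :=
  (norm_det_le_permanent_map_norm A).trans
    (permanent_le_prod_row_sum fun i j => norm_nonneg (A i j))

end Permanent

lemma card_mul_prod_rpow_le_sum {ι : Type*} [Fintype ι] [Nonempty ι] {r : ι → ℝ}
    (hr : ∀ i, 0 ≤ r i) :
    Fintype.card ι * (∏ i, r i) ^ (1 / (Fintype.card ι : ℝ)) ≤ ∑ i, r i := by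
  have card_pos : (0 : ℝ) < Fintype.card ι := by exact_mod_cast Fintype.card_pos
  have am_gm := Real.geom_mean_le_arith_mean Finset.univ (fun _ => 1) r
    (fun _ _ => zero_le_one) (by simpa using card_pos) fun i _ => hr i
  simp only [Real.rpow_one, one_mul, Finset.sum_const, Finset.card_univ, nsmul_eq_mul, mul_one,
    ← one_div] at am_gm
  exact (le_div_iff₀' card_pos).mp am_gm

lemma add_sub_one_le_mul {R : Type*} [CommRing R] [PartialOrder R] [IsOrderedRing R] {x y : R}
    (hx : 1 ≤ x) (hy : 1 ≤ y) : x + y - 1 ≤ x * y := by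
  linear_combination mul_nonneg (sub_nonneg.mpr hx) (sub_nonneg.mpr hy)

theorem entry_sum_ge_of_det_general {ι R : Type*} [Fintype ι] [DecidableEq ι] [Nonempty ι]
    [NormedCommRing R] (A : Matrix ι ι R) :
    Fintype.card ι * ‖A.det‖ ^ (1 / (Fintype.card ι : ℝ)) ≤ ∑ i, ∑ j, ‖A i j‖ :=
  calc Fintype.card ι * ‖A.det‖ ^ (1 / (Fintype.card ι : ℝ))
      ≤ Fintype.card ι * (∏ i, ∑ j, ‖A i j‖) ^ (1 / (Fintype.card ι : ℝ)) := by
        gcongr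
        exact norm_det_le_prod_row_sum_norm A
    _ ≤ ∑ i, ∑ j, ‖A i j‖ :=
        card_mul_prod_rpow_le_sum fun _ => Finset.sum_nonneg fun _ _ => norm_nonneg _

/-- A `k × k` integer matrix with `|det A| = N ≥ 1` has total entry sum
`Σ|a_{ij}| ≥ N^{1/k} + k − 1`. -/
theorem entry_sum_ge_of_det
    (k : ℕ) (hk : 1 ≤ k) (N : ℕ) (hN : 1 ≤ N)
    (A : Matrix (Fin k) (Fin k) ℤ) (hdet : A.det.natAbs = N) :
    (N : ℝ) ^ ((1 : ℝ) / k) + k - 1 ≤ ∑ i, ∑ j, (|A i j| : ℝ) := by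
  have : Nonempty (Fin k) := ⟨⟨0, hk⟩⟩
  have norm_det : ‖A.det‖ = N := by rw [← hdet, Nat.cast_natAbs, Int.cast_abs, Int.norm_eq_abs]
  have one_le_root : 1 ≤ (N : ℝ) ^ ((1 : ℝ) / k) :=
    Real.one_le_rpow (by exact_mod_cast hN) (by positivity)
  calc (N : ℝ) ^ ((1 : ℝ) / k) + k - 1
      ≤ k * (N : ℝ) ^ ((1 : ℝ) / k) :=
        (add_sub_one_le_mul one_le_root (by exact_mod_cast hk)).trans_eq (mul_comm _ _)
    _ ≤ ∑ i, ∑ j, ‖A i j‖ := by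
        simpa only [norm_det, Fintype.card_fin] using entry_sum_ge_of_det_general A
    _ = ∑ i, ∑ j, (|A i j| : ℝ) := by simp only [Int.norm_eq_abs]
end

section
/- Let Λ be a lattice in ℝ² with minimal length ε, and let α, β ∈ Λ be linearly independent over ℝ with ‖α‖ + ‖β‖ ≤ R. Then the subgroup ℤα + ℤβ has finite index in Λ, and this index is at most 8R²/(3ε²). -/
/-!
The index of `ℤα + ℤβ` in `Λ` is the ratio of the two covolumes. By Hadamard's inequality and AM-GM
the numerator is at most `‖α‖ * ‖β‖ ≤ R² / 4`. The open disc of radius `ε` meets `Λ` only at the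
origin, so by Minkowski's convex body theorem the denominator is at least `π * ε² / 4`. Hence the
index is at most `R² / (π * ε²)`, and `3 / 8 < π`. In dimension `n` the same argument bounds the
index by `(2R / n)ⁿ` divided by the volume of the ball of radius `ε`.
-/

open MeasureTheory Module Submodule

theorem prod_le_sum_div_card_pow {ι : Type*} (s : Finset ι) {z : ι → ℝ} (hz : ∀ i ∈ s, 0 ≤ z i) :
    ∏ i ∈ s, z i ≤ ((∑ i ∈ s, z i) / s.card) ^ s.card := by
  obtain rfl | hs := s.eq_empty_or_nonempty
  · simp
  have hprod : 0 ≤ ∏ i ∈ s, z i := Finset.prod_nonneg hz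
  have hmean : (∏ i ∈ s, z i) ^ (s.card : ℝ)⁻¹ ≤ (∑ i ∈ s, z i) / s.card := by
    simpa using Real.geom_mean_le_arith_mean s 1 z (by simp) (by simpa using hs) hz
  calc ∏ i ∈ s, z i = ((∏ i ∈ s, z i) ^ (s.card : ℝ)⁻¹) ^ s.card :=
        (Real.rpow_inv_natCast_pow hprod hs.card_ne_zero).symm
    _ ≤ ((∑ i ∈ s, z i) / s.card) ^ s.card := by gcongr

theorem span_range_coe_submoduleOf {R M ι : Type*} [Semiring R] [AddCommMonoid M] [Module R M]
    {N : Submodule R M} (v : ι → N) :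
    (span R (Set.range fun i ↦ (v i : M))).submoduleOf N = span R (Set.range v) := by
  have hmap : (span R (Set.range v)).map N.subtype = span R (Set.range fun i ↦ (v i : M)) := by
    rw [map_span, ← Set.range_comp]
    rfl
  rw [← hmap]
  exact comap_map_eq_of_injective N.subtype_injective _

theorem pos_of_isLeast_norm_ne_zero {E : Type*} [NormedAddGroup E] {s : Set E} {ε : ℝ}
    (hε : IsLeast {r : ℝ | ∃ v ∈ s, v ≠ 0 ∧ ‖v‖ = r} ε) : 0 < ε := by
  obtain ⟨v, -, hv, rfl⟩ := hε.1
  exact norm_pos_iff.2 hv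

theorem volume_real_ball_fin_two (x : EuclideanSpace ℝ (Fin 2)) {r : ℝ} (hr : 0 ≤ r) :
    volume.real (Metric.ball x r) = Real.pi * r ^ 2 := by
  rw [measureReal_def, EuclideanSpace.volume_ball_fin_two]
  simp [hr, Real.pi_nonneg, mul_comm]

section Minkowski

variable {E : Type*} [NormedAddCommGroup E] [NormedSpace ℝ E] [FiniteDimensional ℝ E]
  [MeasurableSpace E] [BorelSpace E]

theorem measureReal_le_two_pow_finrank_mul_covolume (μ : Measure E) [μ.IsAddHaarMeasure]
    (Λ : Submodule ℤ E) [DiscreteTopology Λ] [IsZLattice ℝ Λ] {s : Set E}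
    (hsymm : ∀ x ∈ s, -x ∈ s) (hconv : Convex ℝ s) (hs : ∀ x ∈ Λ, x ∈ s → x = 0) :
    μ.real s ≤ 2 ^ finrank ℝ E * ZLattice.covolume Λ μ := by
  have fund := ZLattice.isAddFundamentalDomain (Free.chooseBasis ℤ Λ) μ
  set F := ZSpan.fundamentalDomain ((Free.chooseBasis ℤ Λ).ofZLatticeBasis ℝ Λ)
  have hF : μ F ≠ ⊤ := (ZSpan.fundamentalDomain_isBounded _).measure_lt_top.ne
  have : Countable Λ.toAddSubgroup := inferInstanceAs (Countable Λ)
  have hle : μ s ≤ μ F * 2 ^ finrank ℝ E := by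
    by_contra! hlt
    obtain ⟨x, hx, hxs⟩ := exists_ne_zero_mem_lattice_of_measure_mul_two_pow_lt_measure
      (L := Λ.toAddSubgroup) fund hsymm hconv hlt
    exact hx (Subtype.ext (hs x x.2 hxs))
  calc μ.real s ≤ (μ F * 2 ^ finrank ℝ E).toReal := ENNReal.toReal_mono (by finiteness) hle
    _ = 2 ^ finrank ℝ E * ZLattice.covolume Λ μ := by
      rw [ZLattice.covolume_eq_measure_fundamentalDomain Λ μ fund, measureReal_def, mul_comm]
      simp

theorem measureReal_ball_le_two_pow_finrank_mul_covolume (μ : Measure E) [μ.IsAddHaarMeasure]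
    (Λ : Submodule ℤ E) [DiscreteTopology Λ] [IsZLattice ℝ Λ] {ε : ℝ}
    (hε : ∀ w ∈ Λ, w ≠ 0 → ε ≤ ‖w‖) :
    μ.real (Metric.ball 0 ε) ≤ 2 ^ finrank ℝ E * ZLattice.covolume Λ μ := by
  refine measureReal_le_two_pow_finrank_mul_covolume μ Λ (by simp) (convex_ball _ _) ?_
  intro w hw hwε
  by_contra hw₀
  exact (mem_ball_zero_iff.1 hwε).not_ge (hε w hw hw₀)

end Minkowski

section Index

variable {E : Type*} [NormedAddCommGroup E] [InnerProductSpace ℝ E] [FiniteDimensional ℝ E]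
  [MeasurableSpace E] [BorelSpace E] {ι : Type*}

theorem volume_real_parallelepiped_le_prod_norm [Fintype ι] (v : ι → E)
    (hcard : Fintype.card ι = finrank ℝ E) :
    volume.real (parallelepiped v) ≤ ∏ i, ‖v i‖ := by
  have : Fact (finrank ℝ E = Fintype.card ι) := ⟨hcard.symm⟩
  let e := Fintype.equivFin ι
  let o : Orientation ℝ E (Fin (Fintype.card ι)) :=
    ((stdOrthonormalBasis ℝ E).reindex (finCongr hcard.symm)).toBasis.orientation
  rw [← parallelepiped_comp_equiv v e.symm, ← o.measure_eq_volume, measureReal_def,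
    AlternatingMap.measure_parallelepiped, ENNReal.toReal_ofReal (abs_nonneg _),
    ← e.symm.prod_comp]
  exact o.abs_volumeForm_apply_le _

theorem covolume_span_range_basis_le_prod_norm [Fintype ι] (b : Basis ι ℝ E) :
    ZLattice.covolume (span ℤ (Set.range b)) ≤ ∏ i, ‖b i‖ := by
  rw [ZLattice.covolume_eq_measure_fundamentalDomain _ _ (ZSpan.isAddFundamentalDomain b volume),
    measureReal_congr (ZSpan.fundamentalDomain_ae_parallelepiped b volume)]
  exact volume_real_parallelepiped_le_prod_norm b (finrank_eq_card_basis b).symm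

theorem covolume_span_range_basis_le_sum_norm_div_pow [Fintype ι] (b : Basis ι ℝ E) :
    ZLattice.covolume (span ℤ (Set.range b)) ≤ ((∑ i, ‖b i‖) / finrank ℝ E) ^ finrank ℝ E := by
  refine (covolume_span_range_basis_le_prod_norm b).trans ?_
  simpa [finrank_eq_card_basis b] using
    prod_le_sum_div_card_pow Finset.univ fun i _ ↦ norm_nonneg (b i)

theorem card_quotient_submoduleOf_eq_covolume_div_covolume {L Λ : Submodule ℤ E}
    [DiscreteTopology L] [IsZLattice ℝ L] [DiscreteTopology Λ] [IsZLattice ℝ Λ] (h : L ≤ Λ) :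
    (Nat.card (Λ ⧸ L.submoduleOf Λ) : ℝ) = ZLattice.covolume L / ZLattice.covolume Λ :=
  (ZLattice.covolume_div_covolume_eq_relIndex' L Λ h).symm

theorem card_quotient_span_eq_covolume_div_covolume [Finite ι] (Λ : Submodule ℤ E)
    [DiscreteTopology Λ] [IsZLattice ℝ Λ] (v : ι → Λ) (b : Basis ι ℝ E) (hb : ∀ i, b i = v i) :
    (Nat.card (Λ ⧸ span ℤ (Set.range v)) : ℝ) =
      ZLattice.covolume (span ℤ (Set.range b)) / ZLattice.covolume Λ := by
  have hle : span ℤ (Set.range b) ≤ Λ := by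
    rw [span_le]
    rintro _ ⟨i, rfl⟩
    exact hb i ▸ (v i).2
  rw [← span_range_coe_submoduleOf v, ← funext hb]
  exact card_quotient_submoduleOf_eq_covolume_div_covolume hle

theorem sublattice_index_bound_general [Fintype ι] (Λ : Submodule ℤ E) [DiscreteTopology Λ]
    [IsZLattice ℝ Λ] (ε R : ℝ) (hε : IsLeast {r : ℝ | ∃ w ∈ Λ, w ≠ 0 ∧ ‖w‖ = r} ε) (v : ι → Λ)
    (hv : LinearIndependent ℝ fun i ↦ (v i : E)) (hcard : Fintype.card ι = finrank ℝ E)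
    (hlen : ∑ i, ‖(v i : E)‖ ≤ R) :
    Nat.card (Λ ⧸ span ℤ (Set.range v)) ≠ 0 ∧
    (Nat.card (Λ ⧸ span ℤ (Set.range v)) : ℝ) ≤
      (2 * R / finrank ℝ E) ^ finrank ℝ E / volume.real (Metric.ball (0 : E) ε) := by
  let b := basisOfLinearIndependentOfCardEqFinrank' _ hv hcard
  have hb (i : ι) : b i = v i := by simp [b]
  have hcovL := ZLattice.covolume_pos (span ℤ (Set.range b)) volume
  have hcovΛ := ZLattice.covolume_pos Λ volume
  have hindex := card_quotient_span_eq_covolume_div_covolume Λ v b hb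
  have hball : 0 < volume.real (Metric.ball (0 : E) ε) :=
    ENNReal.toReal_pos (Metric.measure_ball_pos _ _ (pos_of_isLeast_norm_ne_zero hε)).ne'
      measure_ball_lt_top.ne
  have hminkowski : volume.real (Metric.ball (0 : E) ε) ≤
      2 ^ finrank ℝ E * ZLattice.covolume Λ :=
    measureReal_ball_le_two_pow_finrank_mul_covolume volume Λ
      fun w hw hw₀ ↦ hε.2 ⟨w, hw, hw₀, rfl⟩
  have hhadamard : ZLattice.covolume (span ℤ (Set.range b)) ≤
      (R / finrank ℝ E) ^ finrank ℝ E :=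
    calc ZLattice.covolume (span ℤ (Set.range b))
        ≤ ((∑ i, ‖b i‖) / finrank ℝ E) ^ finrank ℝ E :=
          covolume_span_range_basis_le_sum_norm_div_pow b
      _ ≤ (R / finrank ℝ E) ^ finrank ℝ E := by
          simp only [hb]
          gcongr
  refine ⟨fun h ↦ (div_pos hcovL hcovΛ).ne' (by simpa [h] using hindex.symm), ?_⟩
  rw [hindex, div_le_div_iff₀ hcovΛ hball]
  calc ZLattice.covolume (span ℤ (Set.range b)) * volume.real (Metric.ball (0 : E) ε)
      ≤ (R / finrank ℝ E) ^ finrank ℝ E * (2 ^ finrank ℝ E * ZLattice.covolume Λ) :=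
        mul_le_mul hhadamard hminkowski hball.le (hcovL.le.trans hhadamard)
    _ = (2 * R / finrank ℝ E) ^ finrank ℝ E * ZLattice.covolume Λ := by
        rw [mul_div_assoc, mul_pow]
        ring

end Index

/-- If `Λ` is a lattice in `ℝ²` with minimal length `ε` and `α, β ∈ Λ`
are linearly independent over `ℝ` with `‖α‖ + ‖β‖ ≤ R`, then `ℤα + ℤβ` has finite index
in `Λ`, at most `8R²/(3ε²)`. -/
theorem sublattice_index_bound
    (Λ : Submodule ℤ (EuclideanSpace ℝ (Fin 2))) [DiscreteTopology Λ] [IsZLattice ℝ Λ]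
    (ε R : ℝ) (hε : IsLeast {r : ℝ | ∃ v ∈ Λ, v ≠ 0 ∧ ‖v‖ = r} ε)
    (α β : EuclideanSpace ℝ (Fin 2)) (hα : α ∈ Λ) (hβ : β ∈ Λ)
    (hind : LinearIndependent ℝ ![α, β]) (hlen : ‖α‖ + ‖β‖ ≤ R) :
    Nat.card (Λ ⧸ (Submodule.span ℤ {(⟨α, hα⟩ : Λ), (⟨β, hβ⟩ : Λ)})) ≠ 0 ∧
    (Nat.card (Λ ⧸ (Submodule.span ℤ {(⟨α, hα⟩ : Λ), (⟨β, hβ⟩ : Λ)})) : ℝ) ≤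
      8 * R ^ 2 / (3 * ε ^ 2) := by
  have hε₀ : 0 < ε := pos_of_isLeast_norm_ne_zero hε
  have hcoe : (fun i ↦ ((![⟨α, hα⟩, ⟨β, hβ⟩] : Fin 2 → Λ) i).1) = ![α, β] := by
    ext1 i
    fin_cases i <;> rfl
  have h := sublattice_index_bound_general Λ ε R hε ![⟨α, hα⟩, ⟨β, hβ⟩] (hcoe ▸ hind)
    (by simp) (by simpa using hlen)
  rw [Matrix.range_cons_cons_empty, volume_real_ball_fin_two 0 hε₀.le,
    finrank_euclideanSpace_fin] at h
  refine h.imp_right fun hle ↦ hle.trans ?_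
  calc (2 * R / (2 : ℕ)) ^ 2 / (Real.pi * ε ^ 2) = 8 * R ^ 2 / (8 * Real.pi * ε ^ 2) := by
        push_cast
        field_simp
    _ ≤ 8 * R ^ 2 / (3 * ε ^ 2) := by gcongr; linarith [Real.pi_gt_three]
end
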